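/- Let 1/2 ≤ α < 1 and let G be a graph on n vertices with m edges. Then for every integer k with 1 ≤ k ≤ n−1, S_k(A_α(G)) ≤ 2αkm/n + √( (k(n−k)/n)·( α²·Z_1(G) + 2m(1−α)² − 4α²m²/n ) ), where Z_1(G) is the sum of the squares of the vertex degrees of G. -/

import Mathlib

open Matrix Finset Real

/-- The `A_α`-matrix of a graph: `A_α(G) = α·D(G) + (1−α)·A(G)`. -/
noncomputable def Aalpha {n : ℕ} (α : ℝ) (G : SimpleGraph (Fin n)) [DecidableRel G.Adj] :
    Matrix (Fin n) (Fin n) ℝ :=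
  α • Matrix.diagonal (fun i => (G.degree i : ℝ)) + (1 - α) • G.adjMatrix ℝ

/-- The sum of the `k` largest eigenvalues of a real symmetric matrix, expressed as
the supremum over all `k`-subsets of indices of the corresponding eigenvalue sums. -/
noncomputable def Sk {n : ℕ} (M : Matrix (Fin n) (Fin n) ℝ) (k : ℕ) : ℝ :=
  if h : M.IsHermitian then
    sSup {x : ℝ | ∃ s : Finset (Fin n), s.card = k ∧ x = ∑ i ∈ s, h.eigenvalues i}
  else 0

/-!
Two numbers about the spectrum are known: `∑ λᵢ = tr M` and `∑ λᵢ² = tr M²`. A partial sum of `k`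
out of `n` reals deviates from `k` times their mean by at most `√(k(n-k)/n)` times the `ℓ²`-norm of
the deviations from the mean: these deviations sum to zero, so the chosen ones and the remaining
ones have opposite sums, and Cauchy–Schwarz applies to both groups. For `M = A_α(G)` the first
trace is `2αm`; in the second the diagonal of `A_α(G)²` has no mixed terms, because `A(G)` has zero
diagonal.
-/

section PartialSums

variable {ι K : Type*} [Fintype ι] [Field K]

lemma sum_sub_mean_eq_zero [CharZero K] [Nonempty ι] (f : ι → K) :
    ∑ i, (f i - (∑ j, f j) / Fintype.card ι) = 0 := by
  rw [sum_sub_distrib, sum_const, card_univ, nsmul_eq_mul,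
    mul_div_cancel₀ _ (Nat.cast_ne_zero.2 Fintype.card_ne_zero), sub_self]

lemma sum_sub_mean_sq [CharZero K] [Nonempty ι] (f : ι → K) :
    ∑ i, (f i - (∑ j, f j) / Fintype.card ι) ^ 2 =
      ∑ i, f i ^ 2 - (∑ i, f i) ^ 2 / Fintype.card ι := by
  have hcard : (Fintype.card ι : K) ≠ 0 := Nat.cast_ne_zero.2 Fintype.card_ne_zero
  simp only [sub_sq, sum_add_distrib, sum_sub_distrib, ← sum_mul, ← mul_sum, sum_const, card_univ,
    nsmul_eq_mul]
  field_simp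
  ring

lemma card_mul_sq_sum_le_of_sum_eq_zero [LinearOrder K] [IsStrictOrderedRing K] {g : ι → K}
    (hg : ∑ i, g i = 0) (s : Finset ι) :
    Fintype.card ι * (∑ i ∈ s, g i) ^ 2 ≤ #s * (Fintype.card ι - #s) * ∑ i, g i ^ 2 := by
  classical
  have hcompl : ∑ i ∈ sᶜ, g i = -∑ i ∈ s, g i :=
    eq_neg_of_add_eq_zero_right ((sum_add_sum_compl s g).trans hg)
  have hcard : (#s + #sᶜ : K) = Fintype.card ι := mod_cast card_add_card_compl s
  have hs : (∑ i ∈ s, g i) ^ 2 ≤ #s * ∑ i ∈ s, g i ^ 2 := sq_sum_le_card_mul_sum_sq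
  have hsc : (∑ i ∈ s, g i) ^ 2 ≤ #sᶜ * ∑ i ∈ sᶜ, g i ^ 2 := by
    simpa only [hcompl, neg_sq] using sq_sum_le_card_mul_sum_sq (s := sᶜ) (f := g)
  calc Fintype.card ι * (∑ i ∈ s, g i) ^ 2
      = #sᶜ * (∑ i ∈ s, g i) ^ 2 + #s * (∑ i ∈ s, g i) ^ 2 := by rw [← hcard]; ring
    _ ≤ #sᶜ * (#s * ∑ i ∈ s, g i ^ 2) + #s * (#sᶜ * ∑ i ∈ sᶜ, g i ^ 2) := by gcongr
    _ = #s * (Fintype.card ι - #s) * ∑ i, g i ^ 2 := by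
      rw [← sum_add_sum_compl s, ← hcard]; ring

lemma sum_le_card_mul_mean_add_sqrt [Nonempty ι] (f : ι → ℝ) (s : Finset ι) :
    ∑ i ∈ s, f i ≤ #s * (∑ i, f i) / Fintype.card ι +
      √(#s * (Fintype.card ι - #s) / Fintype.card ι *
        (∑ i, f i ^ 2 - (∑ i, f i) ^ 2 / Fintype.card ι)) := by
  have hcard : (0 : ℝ) < Fintype.card ι := Nat.cast_pos.2 Fintype.card_pos
  rw [← sum_sub_mean_sq, ← sub_le_iff_le_add']
  have hdev : ∑ i ∈ s, f i - #s * (∑ i, f i) / Fintype.card ι =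
      ∑ i ∈ s, (f i - (∑ j, f j) / Fintype.card ι) := by
    rw [sum_sub_distrib, sum_const, nsmul_eq_mul, mul_div_assoc]
  rw [hdev]
  apply Real.le_sqrt_of_sq_le
  rw [div_mul_eq_mul_div, le_div_iff₀' hcard]
  exact card_mul_sq_sum_le_of_sum_eq_zero (sum_sub_mean_eq_zero f) s

end PartialSums

section Spectrum

lemma trace_pow_eq_sum_eigenvalues_pow {𝕜 ι : Type*} [RCLike 𝕜] [Fintype ι] [DecidableEq ι]
    {M : Matrix ι ι 𝕜} (hM : M.IsHermitian) (p : ℕ) :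
    (M ^ p).trace = ∑ i, (hM.eigenvalues i : 𝕜) ^ p := by
  conv_lhs => rw [hM.spectral_theorem]
  rw [← map_pow, Unitary.conjStarAlgAut_apply, trace_mul_cycle, Unitary.coe_star_mul_self, one_mul,
    diagonal_pow, trace_diagonal]
  rfl

variable {n : ℕ} {M : Matrix (Fin n) (Fin n) ℝ} {k : ℕ}

lemma Sk_le (hM : M.IsHermitian) (hk : k ≤ n) {b : ℝ}
    (hb : ∀ s : Finset (Fin n), #s = k → ∑ i ∈ s, hM.eigenvalues i ≤ b) : Sk M k ≤ b := by
  rw [Sk, dif_pos hM]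
  apply csSup_le
  · obtain ⟨s, -, hs⟩ := exists_subset_card_eq (hk.trans_eq (card_fin n).symm)
    exact ⟨_, s, hs, rfl⟩
  · rintro _ ⟨s, hs, rfl⟩
    exact hb s hs

theorem Sk_le_trace_add_sqrt [NeZero n] (hM : M.IsHermitian) (hk : k ≤ n) :
    Sk M k ≤ k * M.trace / n + √(k * (n - k) / n * ((M ^ 2).trace - M.trace ^ 2 / n)) := by
  refine Sk_le hM hk fun s hs => ?_
  have htrace : M.trace = ∑ i, hM.eigenvalues i := hM.trace_eq_sum_eigenvalues
  have htrace_sq : (M ^ 2).trace = ∑ i, hM.eigenvalues i ^ 2 :=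
    trace_pow_eq_sum_eigenvalues_pow hM 2
  simpa only [htrace, htrace_sq, hs, Fintype.card_fin] using
    sum_le_card_mul_mean_add_sqrt hM.eigenvalues s

end Spectrum

section Aalpha

lemma sum_degrees_cast_eq_twice_card_edges {V R : Type*} [Fintype V] [NonAssocSemiring R]
    (G : SimpleGraph V) [DecidableRel G.Adj] :
    ∑ v, (G.degree v : R) = 2 * #G.edgeFinset := by
  exact_mod_cast congrArg (Nat.cast (R := R)) G.sum_degrees_eq_twice_card_edges

variable {n : ℕ} (α : ℝ) (G : SimpleGraph (Fin n)) [DecidableRel G.Adj]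

lemma isHermitian_Aalpha : (Aalpha α G).IsHermitian :=
  ((isHermitian_diagonal _).smul (.all α)).add
    ((G.isHermitian_adjMatrix (R := ℝ)).smul (.all (1 - α)))

lemma trace_Aalpha : (Aalpha α G).trace = 2 * α * #G.edgeFinset := by
  rw [Aalpha, trace_add, trace_smul, trace_smul, trace_diagonal, G.trace_adjMatrix ℝ,
    sum_degrees_cast_eq_twice_card_edges, smul_zero, add_zero, smul_eq_mul]
  ring

lemma Aalpha_sq_apply_self (v : Fin n) :
    (Aalpha α G ^ 2) v v = α ^ 2 * (G.degree v : ℝ) ^ 2 + (1 - α) ^ 2 * G.degree v := by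
  have hadj : (G.adjMatrix ℝ * G.adjMatrix ℝ) v v = G.degree v :=
    G.adjMatrix_mul_self_apply_self v
  simp only [Aalpha, sq, Matrix.add_mul, Matrix.mul_add, Matrix.add_apply, Matrix.smul_mul,
    Matrix.mul_smul, Matrix.smul_apply, diagonal_mul, mul_diagonal, diagonal_apply_eq, hadj,
    SimpleGraph.adjMatrix_apply, SimpleGraph.irrefl, if_false, smul_eq_mul]
  ring

lemma trace_Aalpha_sq : (Aalpha α G ^ 2).trace =
    α ^ 2 * ∑ v, (G.degree v : ℝ) ^ 2 + 2 * #G.edgeFinset * (1 - α) ^ 2 := by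
  simp only [trace, diag_apply, Aalpha_sq_apply_self, sum_add_distrib, ← mul_sum,
    sum_degrees_cast_eq_twice_card_edges]
  ring

end Aalpha

theorem stmt3_general {n : ℕ} [NeZero n] (G : SimpleGraph (Fin n)) [DecidableRel G.Adj] (α : ℝ)
    (m : ℕ) (hm : G.edgeFinset.card = m) (k : ℕ) (hk : k ≤ n) :
    Sk (Aalpha α G) k ≤ 2 * α * k * m / n +
      Real.sqrt ((k * ((n : ℝ) - k) / n) *
        (α ^ 2 * (∑ v, (G.degree v : ℝ) ^ 2) + 2 * m * (1 - α) ^ 2 - 4 * α ^ 2 * m ^ 2 / n)) := by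
  have hmean : 2 * α * k * m / n = k * (2 * α * m) / (n : ℝ) := by ring
  have hsq : 4 * α ^ 2 * (m : ℝ) ^ 2 / n = (2 * α * m) ^ 2 / n := by ring
  rw [hmean, hsq, ← hm, ← trace_Aalpha, ← trace_Aalpha_sq]
  exact Sk_le_trace_add_sqrt (isHermitian_Aalpha α G) hk

theorem stmt3 {n : ℕ} (G : SimpleGraph (Fin n)) [DecidableRel G.Adj]
    (α : ℝ) (hα0 : 1 / 2 ≤ α) (hα1 : α < 1)
    (m : ℕ) (hm : G.edgeFinset.card = m)
    (k : ℕ) (hk1 : 1 ≤ k) (hkn : k ≤ n - 1) :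
    Sk (Aalpha α G) k ≤ 2 * α * k * m / n +
      Real.sqrt ((k * ((n : ℝ) - k) / n) *
        (α ^ 2 * (∑ v, (G.degree v : ℝ) ^ 2) + 2 * m * (1 - α) ^ 2 - 4 * α ^ 2 * m ^ 2 / n)) := by
  have : NeZero n := ⟨by omega⟩
  exact stmt3_general G α m hm k (by omega)
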